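/- Let H be a real or complex Hilbert space, n ∈ ℕ, and let ψ be a word over n letters, i.e. a finite sequence (i_1, …, i_r) with each i_j ∈ {1, …, n}. For each i ∈ {1, …, n}, let A_i, B_i and E be contractions (bounded linear operators of norm at most 1) on H, and assume each A_i commutes with E. Then ‖ψ(A₁,…,A_n)E − ψ(B₁,…,B_n)E‖ ≤ Σ_{i=1}^{n} |ψ_i| · ‖A_iE − B_iE‖, where ψ(A₁,…,A_n) = A_{i_r} ⋯ A_{i_1} and |ψ_i| is the number of occurrences of the letter i in ψ. -/

import Mathlib

open Filter Topology

/-- Applying a word `ψ = (i₁, …, i_r)` over `n` letters to operators `A 1, …, A n`: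
`ψ(A₁, …, A_n) = A_{i_r} ⋯ A_{i_1}`. -/
noncomputable def wordApply {𝕜 H : Type*} [RCLike 𝕜] [NormedAddCommGroup H]
    [InnerProductSpace 𝕜 H] {n : ℕ} (A : Fin n → H →L[𝕜] H) (ψ : List (Fin n)) :
    H →L[𝕜] H :=
  (ψ.map A).reverse.prod

/-- **Continuous dependence of words on letters.** If `A i`, `B i`, `E` are
contractions and each `A i` commutes with `E`, then
`‖ψ(A₁,…,A_n)E − ψ(B₁,…,B_n)E‖ ≤ ∑ᵢ |ψᵢ| ‖AᵢE − BᵢE‖`,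
where `|ψᵢ|` is the number of occurrences of the letter `i` in the word `ψ`. -/
theorem word_contraction_inequality {𝕜 H : Type*} [RCLike 𝕜]
    [NormedAddCommGroup H] [InnerProductSpace 𝕜 H] [CompleteSpace H]
    {n : ℕ} (ψ : List (Fin n)) (A B : Fin n → H →L[𝕜] H) (E : H →L[𝕜] H)
    (hA : ∀ i, ‖A i‖ ≤ 1) (hB : ∀ i, ‖B i‖ ≤ 1) (hE : ‖E‖ ≤ 1)
    (hcomm : ∀ i, A i * E = E * A i) :
    ‖wordApply A ψ * E - wordApply B ψ * E‖ ≤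
      ∑ i : Fin n, (ψ.count i : ℝ) * ‖A i * E - B i * E‖ := by
  have hW : ∀ φ : List (Fin n), ‖wordApply B φ‖ ≤ 1 := by
    intro φ
    induction φ with
    | nil =>
      have h : wordApply B [] = ContinuousLinearMap.id 𝕜 H := by
        simp [wordApply, ContinuousLinearMap.one_def]
      rw [h]
      exact ContinuousLinearMap.norm_id_le
    | cons j φ ih =>
      have h : wordApply B (j :: φ) = wordApply B φ * B j := by simp [wordApply]
      rw [h]
      exact (norm_mul_le _ _).trans (mul_le_one₀ ih (norm_nonneg _) (hB j))
  induction ψ with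
  | nil => simp [wordApply]
  | cons j φ ih =>
    have hA' : wordApply A (j :: φ) = wordApply A φ * A j := by simp [wordApply]
    have hB' : wordApply B (j :: φ) = wordApply B φ * B j := by simp [wordApply]
    have key : wordApply A (j :: φ) * E - wordApply B (j :: φ) * E
        = (wordApply A φ * E - wordApply B φ * E) * A j
          + wordApply B φ * (A j * E - B j * E) := by
      rw [hA', hB', sub_mul, mul_sub, mul_assoc, mul_assoc, mul_assoc, mul_assoc, ← hcomm j]
      abel
    have hsum : ∑ i : Fin n, (((j :: φ).count i : ℕ) : ℝ) * ‖A i * E - B i * E‖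
        = (∑ i : Fin n, (φ.count i : ℝ) * ‖A i * E - B i * E‖) + ‖A j * E - B j * E‖ := by
      simp [List.count_cons, add_mul, Finset.sum_add_distrib]
    rw [key, hsum]
    refine (norm_add_le _ _).trans (add_le_add ?_ ?_)
    · exact ((norm_mul_le _ _).trans (mul_le_of_le_one_right (norm_nonneg _) (hA j))).trans ih
    · exact (norm_mul_le _ _).trans (mul_le_of_le_one_left (norm_nonneg _) (hW φ))
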